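/- arXiv:2508.19066 — 2 statements merged into one kernel-verified Lean document; each statement's English description precedes it below -/
import Mathlib

section
/- Let R be a commutative ℂ-algebra. For every sequence m : ℤ → M(R) there exists a unique sequence u : ℤ → U(R) such that u(s)·m(s)·u(s+1)⁻¹ ∈ A(R) for every s ∈ ℤ. That is, the group U(R)^ℤ acts freely on M(R)^ℤ by the discrete gauge transformation (u·m)(s) = u(s)·m(s)·u(s+1)⁻¹, and A(R)^ℤ is a cross-section for this action. -/
/-- Steinberg's cross-section `A(R)` for `SL(n)` and the standard Coxeter element. -/
def IsSteinbergA {n : ℕ} {R : Type*} [CommRing R] (m : Matrix (Fin n) (Fin n) R) : Prop :=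
  (∀ i j : Fin n, (i : ℕ) = 0 → (j : ℕ) = n - 1 → m i j = (-1) ^ (n - 1)) ∧
  (∀ i j : Fin n, (i : ℕ) = (j : ℕ) + 1 → m i j = 1) ∧
  (∀ i j : Fin n, (i : ℕ) ≠ 0 → (i : ℕ) ≠ (j : ℕ) + 1 → m i j = 0)

/-- Upper unitriangular `n × n` matrices: the group `U(R)`. -/
def IsUniUpper {n : ℕ} {R : Type*} [CommRing R] (u : Matrix (Fin n) (Fin n) R) : Prop :=
  (∀ i : Fin n, u i i = 1) ∧ ∀ i j : Fin n, (j : ℕ) < (i : ℕ) → u i j = 0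

/-- The `R`-points of the double coset `M = U·c̄·U` of `SL(n)`. -/
def IsSteinbergM {n : ℕ} {R : Type*} [CommRing R] (m : Matrix (Fin n) (Fin n) R) : Prop :=
  m.det = 1 ∧
  (∀ i j : Fin n, (i : ℕ) = (j : ℕ) + 1 → m i j = 1) ∧
  (∀ i j : Fin n, (j : ℕ) + 1 < (i : ℕ) → m i j = 0)


lemma uniUpper_det {n : ℕ} {R : Type*} [CommRing R] {u : Matrix (Fin n) (Fin n) R}
    (hu : IsUniUpper u) : u.det = 1 := by
  have h : u.BlockTriangular id := fun i j hij => hu.2 i j hij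
  rw [Matrix.det_of_isUpperTriangular h]
  exact Finset.prod_eq_one fun i _ => hu.1 i

lemma corner_of_det {N : ℕ} {R : Type*} [CommRing R] {a : Matrix (Fin (N + 1)) (Fin (N + 1)) R}
    (hd : a.det = 1) (ha : ∀ (i : Fin N) j, a i.succ j = (1 : Matrix _ _ R) i.castSucc j) :
    a 0 (Fin.last N) = (-1) ^ N := by
  rw [Matrix.det_succ_column a (Fin.last N), Fin.sum_univ_succ] at hd
  have h1 : a.submatrix (Fin.succAbove 0) (Fin.last N).succAbove = 1 := by
    ext i j
    simp [ha, Matrix.one_apply]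
  have h2 : ∀ i : Fin N, a i.succ (Fin.last N) = 0 := by
    intro i
    rw [ha, Matrix.one_apply_ne (Fin.castSucc_lt_last i).ne]
  rw [h1] at hd
  simp only [h2] at hd
  simp at hd
  calc a 0 (Fin.last N) = ((-1) ^ N * (-1) ^ N) * a 0 (Fin.last N) := by
        rw [← mul_pow]; simp
    _ = (-1) ^ N * ((-1) ^ N * a 0 (Fin.last N)) := by ring
    _ = _ := by rw [hd, mul_one]

lemma steinbergA_iff {N : ℕ} {R : Type*} [CommRing R]
    {u v m : Matrix (Fin (N + 1)) (Fin (N + 1)) R}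
    (hu : IsUniUpper u) (hv : IsUniUpper v) (hm : m.det = 1) :
    IsSteinbergA (u * m * v⁻¹) ↔ ∀ (i : Fin N) j, (u * m) i.succ j = v i.castSucc j := by
  have hvd := uniUpper_det hv
  have hvu : IsUnit v.det := by rw [hvd]; exact isUnit_one
  constructor
  · rintro ⟨-, h2, h3⟩ i j
    have hrow : ∀ k, (u * m * v⁻¹) i.succ k = (1 : Matrix _ _ R) i.castSucc k := by
      intro k
      by_cases hk : i.castSucc = k
      · rw [← hk, Matrix.one_apply_eq]
        exact h2 _ _ (by simp)
      · rw [Matrix.one_apply_ne hk]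
        refine h3 _ _ (by simp) fun h => hk (Fin.ext ?_)
        simpa using h
    have : u * m = (u * m * v⁻¹) * v := by
      rw [Matrix.mul_assoc _ v⁻¹ v, Matrix.nonsing_inv_mul _ hvu, Matrix.mul_one]
    rw [this, Matrix.mul_apply]
    simp only [hrow]
    rw [← Matrix.mul_apply, Matrix.one_mul]
  · intro h
    have hrow : ∀ (i : Fin N) k, (u * m * v⁻¹) i.succ k = (1 : Matrix _ _ R) i.castSucc k := by
      intro i k
      rw [Matrix.mul_apply]
      simp only [h]
      rw [← Matrix.mul_apply, Matrix.mul_nonsing_inv _ hvu]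
    refine ⟨?_, ?_, ?_⟩
    · intro i j hi hj
      have hi' : i = 0 := Fin.ext hi
      have hj' : j = Fin.last N := Fin.ext (by simpa using hj)
      subst hi' hj'
      simp only [Nat.add_sub_cancel]
      refine corner_of_det ?_ hrow
      rw [Matrix.det_mul, Matrix.det_mul, uniUpper_det hu, hm, Matrix.det_nonsing_inv, hvd]
      simp
    · intro i j hij
      obtain ⟨i, rfl⟩ := Fin.exists_succ_eq.2 (show i ≠ 0 by rintro rfl; simp at hij)
      have : i.castSucc = j := Fin.ext (by simpa using hij)
      rw [hrow, this, Matrix.one_apply_eq]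
    · intro i j hi hij
      obtain ⟨i, rfl⟩ := Fin.exists_succ_eq.2 (show i ≠ 0 by rintro rfl; simp at hi)
      rw [hrow, Matrix.one_apply_ne]
      rintro rfl
      simp at hij

/-- Row `N - k` of the gauge transformation at time `s`. -/
def gaugeRow {N : ℕ} {R : Type*} [CommRing R]
    (m : ℤ → Matrix (Fin (N + 1)) (Fin (N + 1)) R) : ℕ → ℤ → Fin (N + 1) → R
  | 0, _ => Pi.single (Fin.last N) 1
  | k + 1, s => fun j => ∑ l, gaugeRow m k (s - 1) l * m (s - 1) l j

lemma gaugeRow_tri {N : ℕ} {R : Type*} [CommRing R]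
    (m : ℤ → Matrix (Fin (N + 1)) (Fin (N + 1)) R) (hm : ∀ s : ℤ, IsSteinbergM (m s)) (k : ℕ) :
    ∀ (s : ℤ) (j : Fin (N + 1)), ((j : ℕ) + k = N → gaugeRow m k s j = 1) ∧
      ((j : ℕ) + k < N → gaugeRow m k s j = 0) := by
  induction k with
  | zero =>
    intro s j
    constructor
    · intro h
      have : j = Fin.last N := Fin.ext (by simpa using h)
      subst this
      simp [gaugeRow]
    · intro h
      have : j ≠ Fin.last N := by rintro rfl; simp at h
      simp [gaugeRow, this]
  | succ k ih =>
    intro s j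
    constructor
    · intro h
      have hj : (j : ℕ) + 1 < N + 1 := by omega
      simp only [gaugeRow]
      rw [Finset.sum_eq_single (⟨(j : ℕ) + 1, hj⟩ : Fin (N + 1))]
      · rw [(ih _ _).1 (by show (j : ℕ) + 1 + k = N; omega), (hm _).2.1 _ _ rfl, mul_one]
      · intro l _ hl
        have hl' : (l : ℕ) ≠ j + 1 := fun h => hl (Fin.ext h)
        by_cases hlt : (l : ℕ) + k < N
        · rw [(ih _ _).2 hlt, zero_mul]
        · rw [(hm _).2.2 l j (by omega), mul_zero]
      · simp
    · intro h
      simp only [gaugeRow]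
      refine Finset.sum_eq_zero fun l _ => ?_
      by_cases hlt : (l : ℕ) + k < N
      · rw [(ih _ _).2 hlt, zero_mul]
      · rw [(hm _).2.2 l j (by omega), mul_zero]

/-- for every sequence `m : ℤ → M(R)` over a commutative `ℂ`-algebra `R` there is a
unique sequence `u : ℤ → U(R)` with `u(s)·m(s)·u(s+1)⁻¹ ∈ A(R)` for every `s`: the group
`U(R)^ℤ` acts freely on `M(R)^ℤ` by the discrete gauge transformation and `A(R)^ℤ` is a
cross-section. -/
theorem stmt_9 (n : ℕ) (hn : 2 ≤ n) (R : Type*) [CommRing R] [Algebra ℂ R]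
    (m : ℤ → Matrix (Fin n) (Fin n) R) (hm : ∀ s : ℤ, IsSteinbergM (m s)) :
    ∃! u : ℤ → Matrix (Fin n) (Fin n) R,
      (∀ s : ℤ, IsUniUpper (u s)) ∧
      ∀ s : ℤ, IsSteinbergA (u s * m s * (u (s + 1))⁻¹) := by
  obtain ⟨N, rfl⟩ : ∃ N, n = N + 1 := ⟨n - 1, by omega⟩
  have hU : ∀ s : ℤ, IsUniUpper
      (Matrix.of fun i j : Fin (N + 1) => gaugeRow m (N - (i : ℕ)) s j) := by
    intro s
    refine ⟨fun i => ?_, fun i j hij => ?_⟩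
    · exact (gaugeRow_tri m hm _ s i).1 (by omega)
    · exact (gaugeRow_tri m hm _ s j).2 (by omega)
  refine ⟨fun s => Matrix.of fun i j => gaugeRow m (N - (i : ℕ)) s j, ⟨hU, fun s => ?_⟩, ?_⟩
  · rw [steinbergA_iff (hU s) (hU (s + 1)) (hm s).1]
    intro i j
    have : N - (i.castSucc : ℕ) = (N - (i.succ : ℕ)) + 1 := by
      simp only [Fin.val_castSucc, Fin.val_succ]; omega
    rw [Matrix.mul_apply, Matrix.of_apply, this]
    simp [gaugeRow]
  · rintro u ⟨hu, hA⟩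
    have key : ∀ k : ℕ, ∀ s (i j : Fin (N + 1)), (i : ℕ) + k = N →
        u s i j = gaugeRow m k s j := by
      intro k
      induction k with
      | zero =>
        intro s i j hi
        have : i = Fin.last N := Fin.ext (by simpa using hi)
        subst this
        by_cases hj : j = Fin.last N
        · subst hj
          simp [gaugeRow, (hu s).1]
        · rw [(hu s).2 _ _ (Fin.lt_last_iff_ne_last.2 hj)]
          simp [gaugeRow, hj]
      | succ k ih =>
        intro s i j hi
        have hi' : (i : ℕ) < N := by omega
        have h := (steinbergA_iff (hu (s - 1)) (hu (s - 1 + 1)) (hm (s - 1)).1).1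
          (hA (s - 1)) ⟨i, hi'⟩ j
        rw [sub_add_cancel, Matrix.mul_apply] at h
        have hc : Fin.castSucc ⟨(i : ℕ), hi'⟩ = i := rfl
        rw [hc] at h
        rw [← h]
        simp only [gaugeRow]
        refine Finset.sum_congr rfl fun l _ => ?_
        rw [ih (s - 1) _ l (by simp only [Fin.val_succ]; omega)]
    funext s
    ext i j
    exact key _ s i j (by omega)
end

section
/- Let R be a commutative ℂ-algebra, let l : ℤ → L(R) be any sequence, and let b₀ be any lower-triangular n×n matrix over R with all diagonal entries invertible and determinant 1. Define b : ℤ → SL(n, R) as the unique sequence of lower-triangular matrices with b(0) = b₀ and b(s)·b(s+1)⁻¹ = l(s) for all s ∈ ℤ. Then there exists a unique sequence u : ℤ → U(R) such that the sequence g(s) := u(s)·b(s) is an (SL(n), c)-band, i.e., g(s)·g(s+1)⁻¹ ∈ A(R) for every s ∈ ℤ. (This expresses the surjectivity on R-points of the morphism P from the scheme of bands with twisted Birkhoff decompositions to (L^{c,e})^ℤ.) -/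
/-- The `R`-points of the reduced double Bruhat cell `L^{c,e}` of `SL(n)`: lower triangular,
subdiagonal entries `1`, entries below the subdiagonal `0`, invertible diagonal entries, and
determinant `1`. -/
def IsSteinbergL {n : ℕ} {R : Type*} [CommRing R] (l : Matrix (Fin n) (Fin n) R) : Prop :=
  l.det = 1 ∧
  (∀ i : Fin n, IsUnit (l i i)) ∧
  (∀ i j : Fin n, (i : ℕ) = (j : ℕ) + 1 → l i j = 1) ∧
  (∀ i j : Fin n, (j : ℕ) + 1 < (i : ℕ) → l i j = 0) ∧
  (∀ i j : Fin n, (i : ℕ) < (j : ℕ) → l i j = 0)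

open Matrix in
lemma IsUniUpper.det_one {n : ℕ} {R : Type*} [CommRing R] {u : Matrix (Fin n) (Fin n) R}
    (h : IsUniUpper u) : u.det = 1 := by
  rw [Matrix.det_of_isUpperTriangular (fun i j hij => h.2 i j hij)]
  simp [h.1]

open Matrix in
lemma steinberg_key {N : ℕ} {R : Type*} [CommRing R] {u u' l : Matrix (Fin (N+1)) (Fin (N+1)) R}
    (hu : IsUniUpper u) (hu' : IsUniUpper u') (hl : l.det = 1) :
    IsSteinbergA (u * l * u'⁻¹) ↔ ∀ i : Fin N, u' i.castSucc = (u * l) i.succ := by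
  have hd : IsUnit u'.det := by rw [hu'.det_one]; exact isUnit_one
  have hM : u * l * u'⁻¹ * u' = u * l := by
    rw [Matrix.mul_assoc, Matrix.nonsing_inv_mul _ hd, Matrix.mul_one]
  have hdet : (u * l * u'⁻¹).det = 1 := by
    have := congrArg Matrix.det hM
    simpa [Matrix.det_mul, hu.det_one, hu'.det_one, hl] using this
  constructor
  · rintro ⟨-, h1, h0⟩ i
    have hrow : (u * l * u'⁻¹) i.succ = Pi.single i.castSucc 1 := by
      ext j
      by_cases hj : j = i.castSucc
      · subst hj
        rw [Pi.single_eq_same]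
        exact h1 _ _ (by simp)
      · rw [Pi.single_eq_of_ne hj]
        refine h0 _ _ (by simp) ?_
        intro h
        apply hj
        ext
        simp at h ⊢
        omega
    rw [← hM, Matrix.mul_apply_eq_vecMul, hrow, Matrix.single_one_vecMul]
    rfl
  · intro h
    have hrow : ∀ i : Fin N, (u * l * u'⁻¹) i.succ = (1 : Matrix (Fin (N+1)) (Fin (N+1)) R) i.castSucc := by
      intro i
      rw [Matrix.mul_apply_eq_vecMul, ← h i, ← Matrix.mul_apply_eq_vecMul,
        Matrix.mul_nonsing_inv _ hd]
    generalize u * l * u'⁻¹ = M at *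
    refine ⟨?_, ?_, ?_⟩
    · intro i j hi hj
      obtain rfl : i = 0 := Fin.ext hi
      obtain rfl : j = Fin.last N := Fin.ext (by simpa using hj)
      rw [Matrix.det_succ_column M (Fin.last N), Fin.sum_univ_succ,
        Finset.sum_eq_zero] at hdet
      · have hsub : M.submatrix (Fin.succAbove 0) (Fin.succAbove (Fin.last N)) = 1 := by
          ext a c
          simp [hrow, Matrix.one_apply]
        rw [hsub] at hdet
        simp at hdet
        have h2 : ((-1 : R)^N) * (-1)^N = 1 := by rw [← mul_pow]; simp
        simp only [Nat.add_sub_cancel]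
        linear_combination (-1 : R)^N * hdet - M 0 (Fin.last N) * h2
      · intro i _
        rw [hrow]
        simp [Matrix.one_apply, (Fin.castSucc_lt_last i).ne]
    · intro i j hij
      obtain ⟨k, rfl⟩ := Fin.exists_succ_eq.2 (show i ≠ 0 by rintro rfl; simp at hij)
      rw [hrow, Matrix.one_apply, if_pos]
      ext
      simp at hij ⊢
      omega
    · intro i j hi hij
      obtain ⟨k, rfl⟩ := Fin.exists_succ_eq.2 (show i ≠ 0 by rintro rfl; simp at hi)
      rw [hrow, Matrix.one_apply, if_neg]
      rintro rfl
      simp at hij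

/-- The rows of the solution, counted from the bottom. -/
def steinbergRow {N : ℕ} {R : Type*} [CommRing R] (l : ℤ → Matrix (Fin (N+1)) (Fin (N+1)) R) :
    ℕ → ℤ → (Fin (N+1) → R)
  | 0, _ => Pi.single (Fin.last N) 1
  | k+1, s => Matrix.vecMul (steinbergRow l k (s-1)) (l (s-1))

lemma steinbergRow_spec {N : ℕ} {R : Type*} [CommRing R]
    (l : ℤ → Matrix (Fin (N+1)) (Fin (N+1)) R) (hl : ∀ s, IsSteinbergL (l s)) (k : ℕ) :
    ∀ s : ℤ, ∀ j : Fin (N+1), ((j:ℕ) + k < N → steinbergRow l k s j = 0) ∧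
      ((j:ℕ) + k = N → steinbergRow l k s j = 1) := by
  induction k with
  | zero =>
    intro s j
    refine ⟨fun h => ?_, fun h => ?_⟩
    · refine Pi.single_eq_of_ne ?_ _
      rintro rfl
      simp at h
    · obtain rfl : j = Fin.last N := Fin.ext (by simpa using h)
      simp [steinbergRow]
  | succ k ih =>
    intro s j
    obtain ⟨-, -, h1, h2, h3⟩ := hl (s-1)
    refine ⟨fun h => ?_, fun h => ?_⟩
    · simp only [steinbergRow, Matrix.vecMul, dotProduct]
      refine Finset.sum_eq_zero fun m _ => ?_
      by_cases hm : (j:ℕ) + 1 < m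
      · rw [h2 _ _ hm, mul_zero]
      · rw [(ih _ m).1 (by omega), zero_mul]
    · simp only [steinbergRow, Matrix.vecMul, dotProduct]
      have hj : (j:ℕ) + 1 < N + 1 := by omega
      rw [Finset.sum_eq_single (⟨j+1, hj⟩ : Fin (N+1))]
      · rw [(ih _ _).2 (by simp; omega), h1 _ _ rfl, mul_one]
      · intro m _ hm
        have hm' : (m:ℕ) ≠ j + 1 := fun h => hm (Fin.ext h)
        by_cases hm : (j:ℕ) + 1 < m
        · rw [h2 _ _ hm, mul_zero]
        · rw [(ih _ m).1 (by omega), zero_mul]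
      · simp

/-- given a sequence `l : ℤ → L(R)` over a commutative `ℂ`-algebra `R` and the
(unique) sequence `b` of lower-triangular matrices with `b 0` having invertible diagonal and
determinant `1` and `b(s)·b(s+1)⁻¹ = l(s)`, there is a unique sequence `u : ℤ → U(R)` such
that `g(s) := u(s)·b(s)` is an `(SL(n), c)`-band (surjectivity on `R`-points of the morphism
`P`). -/
theorem stmt_18 (n : ℕ) (hn : 2 ≤ n) (R : Type*) [CommRing R] [Algebra ℂ R]
    (l : ℤ → Matrix (Fin n) (Fin n) R) (hl : ∀ s : ℤ, IsSteinbergL (l s))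
    (b : ℤ → Matrix (Fin n) (Fin n) R)
    (hblow : ∀ s : ℤ, ∀ i j : Fin n, (i : ℕ) < (j : ℕ) → b s i j = 0)
    (hb0diag : ∀ i : Fin n, IsUnit (b 0 i i))
    (hb0det : (b 0).det = 1)
    (hbrec : ∀ s : ℤ, b s * (b (s + 1))⁻¹ = l s) :
    ∃! u : ℤ → Matrix (Fin n) (Fin n) R,
      (∀ s : ℤ, IsUniUpper (u s)) ∧
      ∀ s : ℤ, IsSteinbergA ((u s * b s) * (u (s + 1) * b (s + 1))⁻¹) := by
  obtain ⟨N, rfl⟩ : ∃ N, n = N + 1 := ⟨n - 1, by omega⟩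
  have hred : ∀ (u : ℤ → Matrix (Fin (N+1)) (Fin (N+1)) R) (s : ℤ),
      (u s * b s) * (u (s + 1) * b (s + 1))⁻¹ = u s * l s * (u (s+1))⁻¹ := by
    intro u s
    rw [Matrix.mul_inv_rev, ← hbrec s]
    simp only [Matrix.mul_assoc]
  simp only [hred]
  obtain ⟨W, hW⟩ : ∃ W : ℤ → Matrix (Fin (N+1)) (Fin (N+1)) R,
      ∀ s i, W s i = steinbergRow l (N - i) s := ⟨fun s i => steinbergRow l (N - i) s, fun _ _ => rfl⟩
  have hU : ∀ s : ℤ, IsUniUpper (W s) := by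
    intro s
    refine ⟨fun i => ?_, fun i j hij => ?_⟩
    · rw [hW]; exact (steinbergRow_spec l hl (N - i) s i).2 (by omega)
    · rw [hW]; exact (steinbergRow_spec l hl (N - i) s j).1 (by omega)
  refine ⟨W, ⟨hU, fun s => ?_⟩, ?_⟩
  · refine (steinberg_key (hU s) (hU (s+1)) (hl s).1).2 fun i => ?_
    rw [Matrix.mul_apply_eq_vecMul, hW, hW]
    have : N - (i.castSucc : ℕ) = (N - (i.succ : ℕ)) + 1 := by simp; omega
    simp only [this, steinbergRow, add_sub_cancel_right]
  · rintro v ⟨hv, hA⟩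
    have main : ∀ k : ℕ, ∀ s : ℤ, ∀ i : Fin (N+1), (i:ℕ) + k = N → v s i = steinbergRow l k s := by
      intro k
      induction k with
      | zero =>
        intro s i hi
        obtain rfl : i = Fin.last N := Fin.ext (by simpa using hi)
        ext j
        by_cases hj : j = Fin.last N
        · subst hj
          simp [steinbergRow, (hv s).1]
        · rw [(hv s).2 _ _ (Fin.lt_last_iff_ne_last.2 hj), steinbergRow, Pi.single_eq_of_ne hj]
      | succ k ih =>
        intro s i hi
        obtain ⟨s, rfl⟩ : ∃ t, s = t + 1 := ⟨s - 1, by ring⟩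
        have hi' : (i:ℕ) < N := by omega
        have h := (steinberg_key (hv s) (hv (s+1)) (hl s).1).1 (hA s) ⟨i, hi'⟩
        rw [Matrix.mul_apply_eq_vecMul, ih s _ (by simp; omega)] at h
        simp only [steinbergRow, add_sub_cancel_right]
        exact h
    funext s i
    rw [hW]
    exact main _ s i (by omega)
end
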